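/- arXiv:math/0005058 — 2 statements merged into one kernel-verified Lean document; each statement's English description precedes it below -/
import Mathlib

section
/- Direct theorem (Theorem 4.1). Let V = {Vⁿ} be a general source and W = {Wⁿ} a general channel. Suppose there exist a channel input X = {Xⁿ} (possibly correlated with the source) and a sequence {γₙ} of reals with γₙ > 0, γₙ → 0 and nγₙ → ∞, such that limₙ Pr{ (1/n) log( Wⁿ(Yⁿ|Xⁿ) / P_{Yⁿ}(Yⁿ) ) ≤ (1/n) log( 1 / P_{Vⁿ}(Vⁿ) ) + γₙ } = 0, where Yⁿ is the channel output due to input Xⁿ. Then V is transmissible over W. -/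
open Filter Real Topology

namespace ISC

/-- Words of length `n` over alphabet `A`. -/
abbrev Word (A : Type*) (n : ℕ) : Type _ := Fin n → A

/-- `p` is a probability mass function. -/
def IsPMF {α : Type*} (p : α → ℝ) : Prop :=
  (∀ a, 0 ≤ p a) ∧ HasSum p 1

/-- Probability of the event `S` under the pmf `p`. -/
noncomputable def prob {α : Type*} (p : α → ℝ) (S : Set α) : ℝ :=
  ∑' a, S.indicator p a

/-- Output marginal `P_{Yⁿ}` of the channel `W` fed with the joint input law `P_{VⁿXⁿ}`. -/
noncomputable def outDist {𝒱 𝒳 𝒴 : Type*} {n : ℕ}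
    (PVX : Word 𝒱 n × Word 𝒳 n → ℝ) (W : Word 𝒳 n → Word 𝒴 n → ℝ)
    (y : Word 𝒴 n) : ℝ :=
  ∑' vx : Word 𝒱 n × Word 𝒳 n, PVX vx * W vx.2 y

/-- Joint law of `(Vⁿ, Xⁿ, Yⁿ)`: `P_{VⁿXⁿ}(v,x) · Wⁿ(y|x)`. -/
noncomputable def jointLaw {𝒱 𝒳 𝒴 : Type*} {n : ℕ}
    (PVX : Word 𝒱 n × Word 𝒳 n → ℝ) (W : Word 𝒳 n → Word 𝒴 n → ℝ) :
    Word 𝒱 n × Word 𝒳 n × Word 𝒴 n → ℝ :=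
  fun z => PVX (z.1, z.2.1) * W z.2.1 z.2.2

/-- The joint input law `P_{VⁿXⁿ}` induced by the deterministic encoder `φ`:
`P_{Vⁿ}(v) 1{x = φ(v)}`. -/
noncomputable def codeInput {𝒱 𝒳 : Type*} [DecidableEq 𝒳] {n : ℕ} (PV : Word 𝒱 n → ℝ)
    (φ : Word 𝒱 n → Word 𝒳 n) : Word 𝒱 n × Word 𝒳 n → ℝ :=
  fun vx => if vx.2 = φ vx.1 then PV vx.1 else 0

/-- Error probability `εₙ` of the joint source-channel code `(φ, ψ)`. -/
noncomputable def errProb {𝒱 𝒳 𝒴 : Type*} {n : ℕ}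
    (PV : Word 𝒱 n → ℝ) (W : Word 𝒳 n → Word 𝒴 n → ℝ)
    (φ : Word 𝒱 n → Word 𝒳 n) (ψ : Word 𝒴 n → Word 𝒱 n) : ℝ :=
  ∑' v, PV v * prob (W (φ v)) {y | ψ y ≠ v}

/-- `V` is transmissible over `W`. -/
def Transmissible {𝒱 𝒳 𝒴 : Type*} (PV : (n : ℕ) → Word 𝒱 n → ℝ)
    (W : (n : ℕ) → Word 𝒳 n → Word 𝒴 n → ℝ) : Prop :=
  ∃ (φ : (n : ℕ) → Word 𝒱 n → Word 𝒳 n) (ψ : (n : ℕ) → Word 𝒴 n → Word 𝒱 n),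
    Tendsto (fun n => errProb (PV n) (W n) (φ n) (ψ n)) atTop (nhds 0)

/-- Output marginal of the channel `W` for an input distribution `P_{Xⁿ}`. -/
noncomputable def outDistX {𝒳 𝒴 : Type*} {n : ℕ}
    (PX : Word 𝒳 n → ℝ) (W : Word 𝒳 n → Word 𝒴 n → ℝ) (y : Word 𝒴 n) : ℝ :=
  ∑' x : Word 𝒳 n, PX x * W x y

/-- Joint law of `(Xⁿ, Yⁿ)`: `P_{Xⁿ}(x) · Wⁿ(y|x)`. -/
noncomputable def jointXY {𝒳 𝒴 : Type*} {n : ℕ}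
    (PX : Word 𝒳 n → ℝ) (W : Word 𝒳 n → Word 𝒴 n → ℝ) :
    Word 𝒳 n × Word 𝒴 n → ℝ :=
  fun z => PX z.1 * W z.1 z.2

/-- Limit superior in probability of a sequence of random variables `Z i`
distributed according to the pmfs `p i`. -/
noncomputable def plimsup {α : ℕ → Type*} (p : (i : ℕ) → α i → ℝ)
    (Z : (i : ℕ) → α i → ℝ) : EReal :=
  sInf {β : EReal |
    Tendsto (fun i => prob (p i) {a | β < (Z i a : EReal)}) atTop (nhds 0)}

/-- Limit inferior in probability of a sequence of random variables `Z i`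
distributed according to the pmfs `p i`. -/
noncomputable def pliminf {α : ℕ → Type*} (p : (i : ℕ) → α i → ℝ)
    (Z : (i : ℕ) → α i → ℝ) : EReal :=
  sSup {β : EReal |
    Tendsto (fun i => prob (p i) {a | (Z i a : EReal) < β}) atTop (nhds 0)}

/-- Spectral sup-entropy rate `H̄(V)`. -/
noncomputable def Hbar {𝒱 : Type*} (PV : (n : ℕ) → Word 𝒱 n → ℝ) : EReal :=
  plimsup (fun n => PV n) (fun n v => (1 / (n : ℝ)) * Real.log (1 / PV n v))

/-- Spectral inf-entropy rate `H_(V)`. -/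
noncomputable def Hlow {𝒱 : Type*} (PV : (n : ℕ) → Word 𝒱 n → ℝ) : EReal :=
  pliminf (fun n => PV n) (fun n v => (1 / (n : ℝ)) * Real.log (1 / PV n v))

/-- Spectral inf-information rate `I_(X;Y)` of the channel `W` with input `X`. -/
noncomputable def Ilow {𝒳 𝒴 : Type*} (PX : (n : ℕ) → Word 𝒳 n → ℝ)
    (W : (n : ℕ) → Word 𝒳 n → Word 𝒴 n → ℝ) : EReal :=
  pliminf (fun n => jointXY (PX n) (W n))
    (fun n z => (1 / (n : ℝ)) * Real.log (W n z.1 z.2 / outDistX (PX n) (W n) z.2))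

/-- Spectral sup-information rate `Ī(X;Y)` of the channel `W` with input `X`. -/
noncomputable def Ihigh {𝒳 𝒴 : Type*} (PX : (n : ℕ) → Word 𝒳 n → ℝ)
    (W : (n : ℕ) → Word 𝒳 n → Word 𝒴 n → ℝ) : EReal :=
  plimsup (fun n => jointXY (PX n) (W n))
    (fun n z => (1 / (n : ℝ)) * Real.log (W n z.1 z.2 / outDistX (PX n) (W n) z.2))

/-- `sup_X I_(X;Y)`: the supremum over all channel inputs. -/
noncomputable def supIlow {𝒳 𝒴 : Type*}
    (W : (n : ℕ) → Word 𝒳 n → Word 𝒴 n → ℝ) : EReal :=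
  ⨆ PX : {PX : (n : ℕ) → Word 𝒳 n → ℝ // ∀ n, IsPMF (PX n)}, Ilow PX.1 W

/-! Random coding with a threshold decoder. Draw the codeword of each message `v` independently
from the conditional law of the channel input given `v`, and decode `y` to a message `v` whose
codeword `x` satisfies `P_Y(y) ≤ e⁻ᵃ P_V(v) W(y|x)`. An error means that the message sent fails
this test, or that some other message passes it. The first event has, on average over the
codebook, the probability bounded by hypothesis. In the second, the codeword of the wrong
message `v'` is independent of the output, which on average has law `P_Y`; summing the test over
`y` gives `v'` an acceptance probability of at most `e⁻ᵃ P_V(v')`, hence at most `e⁻ᵃ` in total.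
Some codebook does as well as the average, and `a = nγ → ∞`. -/

section RandomCoding

open MeasureTheory
open scoped ENNReal

variable {V X Y : Type*}

theorem toOuterMeasure_le_of_le_mul {q r : PMF Y} {c : ℝ≥0∞} {S : Set Y}
    (h : ∀ y ∈ S, q y ≤ c * r y) : q.toOuterMeasure S ≤ c := by
  rw [PMF.toOuterMeasure_apply]
  calc ∑' y, S.indicator q y
      ≤ ∑' y, c * r y := ENNReal.tsum_le_tsum (Set.indicator_le' h fun _ _ => zero_le)
    _ = c := by rw [ENNReal.tsum_mul_left, r.tsum_coe, mul_one]

theorem toOuterMeasure_ne_top (q : PMF Y) (S : Set Y) : q.toOuterMeasure S ≠ ∞ := by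
  rw [PMF.toOuterMeasure_apply]
  exact q.tsum_coe_indicator_ne_top S

/-- Joint law on `X × Y` of an input with law `p` and its output under the kernel `k`. -/
noncomputable def jointPMF (p : PMF X) (k : X → PMF Y) : PMF (X × Y) :=
  p.bind fun x => (k x).map (Prod.mk x)

theorem jointPMF_apply (p : PMF X) (k : X → PMF Y) (x : X) (y : Y) :
    jointPMF p k (x, y) = p x * k x y := by
  classical
  rw [jointPMF, PMF.bind_apply, tsum_eq_single x fun x' hx => by
    simp [PMF.map_apply, Ne.symm hx]]
  simp [PMF.map_apply]

theorem toOuterMeasure_jointPMF (p : PMF X) (k : X → PMF Y) (S : Set (X × Y)) :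
    (jointPMF p k).toOuterMeasure S = ∑' x, p x * (k x).toOuterMeasure (Prod.mk x ⁻¹' S) := by
  simp only [jointPMF, PMF.toOuterMeasure_bind_apply, PMF.toOuterMeasure_map_apply]

theorem exists_eq_jointPMF {p : PMF X} {q : PMF (X × Y)} (hpq : ∀ x, ∑' y, q (x, y) = p x) :
    ∃ k : X → PMF Y, q = jointPMF p k := by
  have exists_row (x : X) : ∃ r : PMF Y, ∀ y, q (x, y) = p x * r y := by
    by_cases hx : p x = 0
    · obtain ⟨xy, -⟩ := q.support_nonempty
      have hq : ∀ y, q (x, y) = 0 := ENNReal.tsum_eq_zero.mp ((hpq x).trans hx)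
      exact ⟨PMF.pure xy.2, fun y => by rw [hx, zero_mul, hq]⟩
    · have row_ne_top : ∑' y, q (x, y) ≠ ∞ := hpq x ▸ p.apply_ne_top x
      refine ⟨PMF.normalize (fun y => q (x, y)) (by rwa [hpq]) row_ne_top, fun y => ?_⟩
      rw [PMF.normalize_apply, hpq, mul_left_comm, ENNReal.mul_inv_cancel hx (p.apply_ne_top x),
        mul_one]
  choose k hk using exists_row
  exact ⟨k, PMF.ext fun ⟨x, y⟩ => by rw [hk, jointPMF_apply]⟩

/-- Error probability of the code with encoder `φ` and decoder `ψ`, for a source law `p` and a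
channel `w` given as probability mass functions. -/
noncomputable def codeError (p : PMF V) (w : X → PMF Y) (φ : V → X) (ψ : Y → V) : ℝ≥0∞ :=
  ∑' v, p v * (w (φ v)).toOuterMeasure {y | ψ y ≠ v}

/-- Decoder for the codebook `φ`: it outputs some message `v` whose acceptance region
`T v (φ v)` contains the received `y`, and an arbitrary message if there is none. -/
noncomputable def acceptDecoder [Nonempty V] (T : V → X → Set Y) (φ : V → X) (y : Y) : V :=
  Classical.epsilon fun v => y ∈ T v (φ v)

/-- Probability that the channel output falls outside the acceptance region of the message sent
with the codebook `φ`. -/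
noncomputable def missProb (p : PMF V) (w : X → PMF Y) (T : V → X → Set Y) (φ : V → X) : ℝ≥0∞ :=
  ∑' v, p v * (w (φ v)).toOuterMeasure (T v (φ v))ᶜ

/-- Expected number of wrong messages whose acceptance region contains the channel output, for
the codebook `φ`. -/
noncomputable def confusion (p : PMF V) (w : X → PMF Y) (T : V → X → Set Y) (φ : V → X) : ℝ≥0∞ :=
  ∑' v, p v * ∑' v' : ({v}ᶜ : Set V), (w (φ v)).toOuterMeasure (T v' (φ v'))

theorem mem_accept_acceptDecoder [Nonempty V] {T : V → X → Set Y} {φ : V → X} {v : V} {y : Y}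
    (h : y ∈ T v (φ v)) : y ∈ T (acceptDecoder T φ y) (φ (acceptDecoder T φ y)) :=
  Classical.epsilon_spec (p := fun v => y ∈ T v (φ v)) ⟨v, h⟩

theorem codeError_acceptDecoder_le [Countable V] [Nonempty V] (p : PMF V) (w : X → PMF Y)
    (T : V → X → Set Y) (φ : V → X) :
    codeError p w φ (acceptDecoder T φ) ≤ missProb p w T φ + confusion p w T φ := by
  simp only [codeError, missProb, confusion, ← ENNReal.tsum_add, ← mul_add]
  refine ENNReal.tsum_le_tsum fun v => mul_le_mul_right ?_ _
  have error_subset : {y | acceptDecoder T φ y ≠ v} ⊆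
      (T v (φ v))ᶜ ∪ ⋃ v' ∈ ({v}ᶜ : Set V), T v' (φ v') := by
    intro y hy
    by_cases hv : y ∈ T v (φ v)
    · exact .inr (Set.mem_biUnion hy (mem_accept_acceptDecoder hv))
    · exact .inl hv
  exact (measure_mono error_subset).trans <| (measure_union_le _ _).trans <|
    add_le_add_right (measure_biUnion_le _ (Set.to_countable _) _) _

section Codebook

variable [MeasurableSpace X]

/-- Law of the random codebook: the codewords of distinct messages are independent, and that of
`v` has law `P v`. -/
noncomputable def randomCodebook (P : V → PMF X) : Measure (V → X) :=
  Measure.infinitePi fun v => (P v).toMeasure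

instance (P : V → PMF X) : IsProbabilityMeasure (randomCodebook P) :=
  inferInstanceAs (IsProbabilityMeasure (Measure.infinitePi _))

variable [Countable X] [MeasurableSingletonClass X]

theorem lintegral_pmf_toMeasure (r : PMF X) (f : X → ℝ≥0∞) :
    ∫⁻ x, f x ∂r.toMeasure = ∑' x, r x * f x := by
  rw [lintegral_countable']
  simp only [PMF.toMeasure_apply_singleton _ _ (measurableSet_singleton _), mul_comm]

theorem lintegral_randomCodebook_eval (P : V → PMF X) (v : V) (f : X → ℝ≥0∞) :
    ∫⁻ φ, f (φ v) ∂randomCodebook P = ∑' x, P v x * f x := by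
  rw [← lintegral_pmf_toMeasure]
  exact (measurePreserving_eval_infinitePi (fun v => (P v).toMeasure) v).lintegral_comp .of_discrete

theorem lintegral_randomCodebook_eval_pair (P : V → PMF X) {v v' : V} (hne : v ≠ v')
    (f : X → X → ℝ≥0∞) :
    ∫⁻ φ, f (φ v) (φ v') ∂randomCodebook P = ∑' x, P v x * ∑' x', P v' x' * f x x' := by
  have pair_law : (randomCodebook P).map (fun φ => (φ v, φ v')) =
      (P v).toMeasure.prod (P v').toMeasure := Measure.infinitePi_map_eval_prod hne
  have f_measurable : Measurable fun z : X × X => f z.1 z.2 := .of_discrete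
  simp only [← lintegral_pmf_toMeasure]
  rw [← lintegral_prod _ f_measurable.aemeasurable, ← pair_law,
    lintegral_map f_measurable (by fun_prop)]

variable (p : PMF V) (P : V → PMF X) (w : X → PMF Y) (T : V → X → Set Y)

theorem measurable_toOuterMeasure_region (v v' : V) :
    Measurable fun φ : V → X => (w (φ v)).toOuterMeasure (T v' (φ v')) := by
  have measurable_pair : Measurable fun z : X × X => (w z.1).toOuterMeasure (T v' z.2) :=
    .of_discrete
  have measurable_eval_pair : Measurable fun φ : V → X => (φ v, φ v') := by fun_prop
  exact measurable_pair.comp measurable_eval_pair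

variable [Countable V]

theorem measurable_missProb : Measurable (missProb p w T) :=
  .tsum fun v => (measurable_toOuterMeasure_region w (fun v x => (T v x)ᶜ) v v).const_mul _

theorem measurable_confusion : Measurable (confusion p w T) :=
  .tsum fun v => .const_mul
    (.tsum fun v' : ({v}ᶜ : Set V) => measurable_toOuterMeasure_region w T v v') _

theorem lintegral_missProb : ∫⁻ φ, missProb p w T φ ∂randomCodebook P =
    (jointPMF p fun v => jointPMF (P v) w).toOuterMeasure {z | z.2.2 ∉ T z.1 z.2.1} := by
  have term_measurable (v : V) := measurable_toOuterMeasure_region w (fun v x => (T v x)ᶜ) v v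
  unfold missProb
  rw [lintegral_tsum fun v => ((term_measurable v).const_mul _).aemeasurable]
  simp only [lintegral_const_mul _ (term_measurable _), toOuterMeasure_jointPMF]
  exact tsum_congr fun v => congrArg _ <|
    lintegral_randomCodebook_eval P v fun x => (w x).toOuterMeasure (T v x)ᶜ

theorem lintegral_confusion_le_tsum : ∫⁻ φ, confusion p w T φ ∂randomCodebook P ≤
    ∑' v', ∑' x', P v' x' * (p.bind fun v => (P v).bind w).toOuterMeasure (T v' x') := by
  unfold confusion
  have meas := measurable_toOuterMeasure_region w T
  rw [lintegral_tsum fun v => ((Measurable.tsum fun _ => meas _ _).const_mul _).aemeasurable]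
  calc _ = ∑' v, p v * ∑' v' : ({v}ᶜ : Set V), ∑' x, P v x * ∑' x', P v' x' *
          (w x).toOuterMeasure (T v' x') := by
        refine tsum_congr fun v => ?_
        rw [lintegral_const_mul _ (.tsum fun _ => meas _ _),
          lintegral_tsum fun _ => (meas _ _).aemeasurable]
        congr 1
        exact tsum_congr fun v' => lintegral_randomCodebook_eval_pair P (Ne.symm v'.2)
          fun x x' => (w x).toOuterMeasure (T v' x')
    _ ≤ ∑' v, p v * ∑' v', ∑' x, P v x * ∑' x', P v' x' * (w x).toOuterMeasure (T v' x') := by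
        gcongr
        exact ENNReal.tsum_comp_le_tsum_of_injective Subtype.val_injective _
    _ = _ := by
        simp only [PMF.toOuterMeasure_bind_apply, ← ENNReal.tsum_mul_left]
        rw [ENNReal.tsum_comm]
        refine tsum_congr fun v' => ?_
        rw [tsum_congr fun v => ENNReal.tsum_comm, ENNReal.tsum_comm]
        exact tsum_congr fun x' => tsum_congr fun v => tsum_congr fun x => by ring

theorem lintegral_confusion_le {c : ℝ≥0∞}
    (hT : ∀ v x, (p.bind fun v => (P v).bind w).toOuterMeasure (T v x) ≤ c * p v) :
    ∫⁻ φ, confusion p w T φ ∂randomCodebook P ≤ c := by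
  calc ∫⁻ φ, confusion p w T φ ∂randomCodebook P
      ≤ ∑' v', ∑' x', P v' x' * (p.bind fun v => (P v).bind w).toOuterMeasure (T v' x') :=
        lintegral_confusion_le_tsum p P w T
    _ ≤ ∑' v', ∑' x', P v' x' * (c * p v') := by gcongr; exact hT _ _
    _ = c := by
      simp only [ENNReal.tsum_mul_right, ENNReal.tsum_mul_left, PMF.tsum_coe, one_mul, mul_one]

end Codebook

theorem exists_codeError_le [Countable V] [Countable X] (p : PMF V) (P : V → PMF X)
    (w : X → PMF Y) (T : V → X → Set Y) {c : ℝ≥0∞}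
    (hT : ∀ v x, (p.bind fun v => (P v).bind w).toOuterMeasure (T v x) ≤ c * p v) :
    ∃ φ ψ, codeError p w φ ψ ≤
      (jointPMF p fun v => jointPMF (P v) w).toOuterMeasure {z | z.2.2 ∉ T z.1 z.2.1} + c := by
  let _ : MeasurableSpace X := ⊤
  have : Nonempty V := p.support_nonempty.to_type
  have miss_measurable := measurable_missProb p w T
  obtain ⟨φ, hφ⟩ := exists_le_lintegral (μ := randomCodebook P)
    (f := fun φ => missProb p w T φ + confusion p w T φ)
    (miss_measurable.add (measurable_confusion p w T)).aemeasurable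
  refine ⟨φ, acceptDecoder T φ, ?_⟩
  calc codeError p w φ (acceptDecoder T φ)
      ≤ missProb p w T φ + confusion p w T φ := codeError_acceptDecoder_le p w T φ
    _ ≤ ∫⁻ φ, missProb p w T φ + confusion p w T φ ∂randomCodebook P := hφ
    _ ≤ _ := by
      rw [lintegral_add_left miss_measurable, lintegral_missProb]
      gcongr
      exact lintegral_confusion_le p P w T hT

theorem lt_exp_neg_mul_of_log_inv_add_lt {p w o a : ℝ} (hp : 0 < p) (hw : 0 < w) (ho : 0 < o)
    (h : log (1 / p) + a < log (w / o)) : o < exp (-a) * (p * w) := by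
  have exp_lt : 1 / p * exp a < w / o := by
    rwa [← exp_lt_exp, exp_add, exp_log (by positivity), exp_log (by positivity)] at h
  rw [exp_neg]
  field_simp at exp_lt ⊢
  exact exp_lt

theorem le_ofReal_exp_neg_mul_of_log_inv_add_lt {p w o : ℝ≥0∞} {a : ℝ} (hp : p ≠ 0) (hp' : p ≠ ∞)
    (hw : w ≠ 0) (hw' : w ≠ ∞) (ho : o ≠ 0) (ho' : o ≠ ∞)
    (h : log (1 / p.toReal) + a < log (w.toReal / o.toReal)) :
    o ≤ ENNReal.ofReal (exp (-a)) * (p * w) := by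
  have := lt_exp_neg_mul_of_log_inv_add_lt (ENNReal.toReal_pos hp hp') (ENNReal.toReal_pos hw hw')
    (ENNReal.toReal_pos ho ho') h
  rw [← ENNReal.toReal_le_toReal ho' (by finiteness)]
  simpa [ENNReal.toReal_mul, (exp_pos _).le] using this.le

theorem exists_codeError_le_informationDensity [Countable V] [Countable X] (p : PMF V)
    (P : V → PMF X) (w : X → PMF Y) (a : ℝ) :
    ∃ φ ψ, codeError p w φ ψ ≤
      (jointPMF p fun v => jointPMF (P v) w).toOuterMeasure
        {z | log ((w z.2.1 z.2.2).toReal / ((p.bind fun v => (P v).bind w) z.2.2).toReal) ≤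
          log (1 / (p z.1).toReal) + a} + ENNReal.ofReal (exp (-a)) := by
  set out := p.bind fun v => (P v).bind w
  obtain ⟨φ, ψ, h⟩ := exists_codeError_le p P w
    (fun v x => {y | out y ≤ ENNReal.ofReal (exp (-a)) * (p v * w x y)})
    fun v x => toOuterMeasure_le_of_le_mul (r := w x) fun y hy => by rwa [mul_assoc]
  refine ⟨φ, ψ, h.trans (add_le_add_left (PMF.toOuterMeasure_mono _ ?_) _)⟩
  rintro ⟨v, x, y⟩ ⟨not_accepted, in_support⟩
  simp only [PMF.mem_support_iff, jointPMF_apply, mul_ne_zero_iff] at in_support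
  obtain ⟨hv, hx, hy⟩ := in_support
  have hout : out y ≠ 0 := by
    rw [← PMF.mem_support_iff, PMF.mem_support_bind_iff]
    exact ⟨v, hv, (PMF.mem_support_bind_iff ..).mpr ⟨x, hx, hy⟩⟩
  by_contra large_density
  exact not_accepted <| le_ofReal_exp_neg_mul_of_log_inv_add_lt hv (p.apply_ne_top v) hy
    ((w x).apply_ne_top y) hout (out.apply_ne_top y) (not_le.mp large_density)

end RandomCoding

section RealCodes

open MeasureTheory
open scoped ENNReal

theorem IsPMF.exists_pmf {α : Type*} {p : α → ℝ} (hp : IsPMF p) :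
    ∃ q : PMF α, p = fun a => (q a).toReal := by
  have total : ∑' a, ENNReal.ofReal (p a) = 1 := by
    rw [← ENNReal.ofReal_tsum_of_nonneg hp.1 hp.2.summable, hp.2.tsum_eq, ENNReal.ofReal_one]
  exact ⟨⟨fun a => ENNReal.ofReal (p a), total ▸ ENNReal.summable.hasSum⟩,
    funext fun a => (ENNReal.toReal_ofReal (hp.1 a)).symm⟩

theorem prob_toReal {α : Type*} (q : PMF α) (S : Set α) :
    prob (fun a => (q a).toReal) S = (q.toOuterMeasure S).toReal := by
  classical
  rw [PMF.toOuterMeasure_apply, ENNReal.tsum_toReal_eq fun a => ne_top_of_le_ne_top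
    (q.apply_ne_top a) (Set.indicator_le_self S q a)]
  exact tsum_congr fun a => by by_cases ha : a ∈ S <;> simp [ha]

variable {𝒱 𝒳 𝒴 : Type*} {n : ℕ}

theorem errProb_toReal (p : PMF (Word 𝒱 n)) (w : Word 𝒳 n → PMF (Word 𝒴 n))
    (φ : Word 𝒱 n → Word 𝒳 n) (ψ : Word 𝒴 n → Word 𝒱 n) :
    errProb (fun v => (p v).toReal) (fun x y => (w x y).toReal) φ ψ =
      (codeError p w φ ψ).toReal := by
  rw [codeError, ENNReal.tsum_toReal_eq fun v => ENNReal.mul_ne_top (p.apply_ne_top v)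
    (toOuterMeasure_ne_top _ _)]
  simp only [errProb, prob_toReal, ENNReal.toReal_mul]

theorem outDist_toReal (p : PMF (Word 𝒱 n)) (P : Word 𝒱 n → PMF (Word 𝒳 n))
    (w : Word 𝒳 n → PMF (Word 𝒴 n)) (y : Word 𝒴 n) :
    outDist (fun vx => (jointPMF p P vx).toReal) (fun x y => (w x y).toReal) y =
      ((p.bind fun v => (P v).bind w) y).toReal := by
  have mass : (p.bind fun v => (P v).bind w) y =
      ∑' vx : Word 𝒱 n × Word 𝒳 n, jointPMF p P vx * w vx.2 y := by
    simp only [PMF.bind_apply, ENNReal.tsum_prod', jointPMF_apply, ← ENNReal.tsum_mul_left,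
      mul_assoc]
  rw [mass, ENNReal.tsum_toReal_eq fun vx => ENNReal.mul_ne_top ((jointPMF p P).apply_ne_top vx)
    ((w vx.2).apply_ne_top y)]
  simp only [outDist, ENNReal.toReal_mul]

theorem jointLaw_toReal (p : PMF (Word 𝒱 n)) (P : Word 𝒱 n → PMF (Word 𝒳 n))
    (w : Word 𝒳 n → PMF (Word 𝒴 n)) :
    jointLaw (fun vx => (jointPMF p P vx).toReal) (fun x y => (w x y).toReal) =
      fun z => (jointPMF p (fun v => jointPMF (P v) w) z).toReal := by
  funext ⟨v, x, y⟩
  simp only [jointLaw, ← ENNReal.toReal_mul, jointPMF_apply, mul_assoc]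

theorem add_mul_lt_of_inv_mul_add_lt {n : ℕ} {γ L M : ℝ} (hγ : 0 < γ)
    (h : 1 / (n : ℝ) * M + γ < 1 / (n : ℝ) * L) : M + n * γ < L := by
  -- For `n = 0` both rates are `0`, since `1 / 0 = 0`, and `h` reads `γ < 0`.
  have hn : 0 < (n : ℝ) := by
    refine (Nat.cast_nonneg n).lt_of_ne' fun hn => ?_
    simp only [hn, div_zero, zero_mul, zero_add] at h
    exact h.not_gt hγ
  calc M + n * γ = n * (1 / (n : ℝ) * M + γ) := by field_simp
    _ < n * (1 / (n : ℝ) * L) := by gcongr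
    _ = L := by field_simp

theorem exists_errProb_le [Countable 𝒱] [Countable 𝒳] {PV : Word 𝒱 n → ℝ} (hPV : IsPMF PV)
    {W : Word 𝒳 n → Word 𝒴 n → ℝ} (hW : ∀ x, IsPMF (W x))
    {PVX : Word 𝒱 n × Word 𝒳 n → ℝ} (hPVX : IsPMF PVX)
    (hmarg : ∀ v, ∑' x : Word 𝒳 n, PVX (v, x) = PV v) {γ : ℝ} (hγ : 0 < γ) :
    ∃ φ ψ, errProb PV W φ ψ ≤
      prob (jointLaw PVX W)
        {z | (1 / (n : ℝ)) * log (W z.2.1 z.2.2 / outDist PVX W z.2.2) ≤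
          (1 / (n : ℝ)) * log (1 / PV z.1) + γ} + exp (-(n * γ)) := by
  obtain ⟨p, rfl⟩ := hPV.exists_pmf
  obtain ⟨q, rfl⟩ := hPVX.exists_pmf
  choose w hw using fun x => (hW x).exists_pmf
  obtain rfl : W = fun x y => (w x y).toReal := funext hw
  have hpq (v : Word 𝒱 n) : ∑' x, q (v, x) = p v := by
    have row_ne_top : ∑' x, q (v, x) ≠ ∞ := ne_top_of_le_ne_top q.tsum_coe_ne_top
      (ENNReal.tsum_comp_le_tsum_of_injective (Prod.mk_right_injective v) q)
    rw [← ENNReal.toReal_eq_toReal_iff' row_ne_top (p.apply_ne_top v)]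
    exact (ENNReal.tsum_toReal_eq fun x => q.apply_ne_top _).trans (hmarg v)
  obtain ⟨P, rfl⟩ := exists_eq_jointPMF hpq
  obtain ⟨φ, ψ, h⟩ := exists_codeError_le_informationDensity p P w (n * γ)
  refine ⟨φ, ψ, ?_⟩
  simp only [errProb_toReal, outDist_toReal, jointLaw_toReal, prob_toReal]
  rw [← ENNReal.toReal_ofReal (exp_pos (-(n * γ))).le,
    ← ENNReal.toReal_add (toOuterMeasure_ne_top _ _) ENNReal.ofReal_ne_top]
  refine ENNReal.toReal_mono
    (ENNReal.add_ne_top.mpr ⟨toOuterMeasure_ne_top _ _, ENNReal.ofReal_ne_top⟩) (h.trans ?_)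
  gcongr ?_ + _
  refine measure_mono fun z small_density => ?_
  by_contra large_rate
  exact (add_mul_lt_of_inv_mul_add_lt hγ (not_le.mp large_rate)).not_ge small_density

theorem errProb_nonneg {PV : Word 𝒱 n → ℝ} (hPV : ∀ v, 0 ≤ PV v) {W : Word 𝒳 n → Word 𝒴 n → ℝ}
    (hW : ∀ x y, 0 ≤ W x y) (φ : Word 𝒱 n → Word 𝒳 n) (ψ : Word 𝒴 n → Word 𝒱 n) :
    0 ≤ errProb PV W φ ψ :=
  tsum_nonneg fun v => mul_nonneg (hPV v) <|
    tsum_nonneg fun y => Set.indicator_nonneg (fun y _ => hW (φ v) y) y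

end RealCodes

theorem direct_theorem_general
    {𝒱 𝒳 𝒴 : Type*} [Countable 𝒱] [Countable 𝒳]
    (PV : (n : ℕ) → Word 𝒱 n → ℝ) (hPV : ∀ n, IsPMF (PV n))
    (W : (n : ℕ) → Word 𝒳 n → Word 𝒴 n → ℝ) (hW : ∀ n x, IsPMF (W n x))
    (PVX : (n : ℕ) → Word 𝒱 n × Word 𝒳 n → ℝ) (hPVX : ∀ n, IsPMF (PVX n))
    (hmarg : ∀ n v, (∑' x : Word 𝒳 n, PVX n (v, x)) = PV n v)
    (γ : ℕ → ℝ) (hγpos : ∀ n, 0 < γ n)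
    (hnγ : Tendsto (fun n : ℕ => (n : ℝ) * γ n) atTop atTop)
    (hspec : Tendsto (fun n =>
        prob (jointLaw (PVX n) (W n))
          {z : Word 𝒱 n × Word 𝒳 n × Word 𝒴 n |
            (1 / (n : ℝ)) * Real.log (W n z.2.1 z.2.2 / outDist (PVX n) (W n) z.2.2) ≤
              (1 / (n : ℝ)) * Real.log (1 / PV n z.1) + γ n}) atTop (nhds 0)) :
    Transmissible PV W := by
  choose φ ψ h using fun n => exists_errProb_le (hPV n) (hW n) (hPVX n) (hmarg n) (hγpos n)
  have bound_tendsto := hspec.add (tendsto_exp_neg_atTop_nhds_zero.comp hnγ)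
  rw [add_zero] at bound_tendsto
  exact ⟨φ, ψ, squeeze_zero (fun n => errProb_nonneg (hPV n).1 (fun x => (hW n x).1) _ _) h
    bound_tendsto⟩

/-- **Direct theorem** (Theorem 4.1). -/
theorem direct_theorem
    {𝒱 𝒳 𝒴 : Type} [Countable 𝒱] [Countable 𝒳] [Countable 𝒴]
    (PV : (n : ℕ) → Word 𝒱 n → ℝ) (hPV : ∀ n, IsPMF (PV n))
    (W : (n : ℕ) → Word 𝒳 n → Word 𝒴 n → ℝ) (hW : ∀ n x, IsPMF (W n x))
    (PVX : (n : ℕ) → Word 𝒱 n × Word 𝒳 n → ℝ) (hPVX : ∀ n, IsPMF (PVX n))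
    (hmarg : ∀ n v, (∑' x : Word 𝒳 n, PVX n (v, x)) = PV n v)
    (γ : ℕ → ℝ) (hγpos : ∀ n, 0 < γ n)
    (hγ0 : Tendsto γ atTop (nhds 0))
    (hnγ : Tendsto (fun n : ℕ => (n : ℝ) * γ n) atTop atTop)
    (hspec : Tendsto (fun n =>
        prob (jointLaw (PVX n) (W n))
          {z : Word 𝒱 n × Word 𝒳 n × Word 𝒴 n |
            (1 / (n : ℝ)) * Real.log (W n z.2.1 z.2.2 / outDist (PVX n) (W n) z.2.2) ≤
              (1 / (n : ℝ)) * Real.log (1 / PV n z.1) + γ n}) atTop (nhds 0)) :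
    Transmissible PV W := by
  exact direct_theorem_general PV hPV W hW PVX hPVX hmarg γ hγpos hnγ hspec

end ISC
end

section
/- Converse theorem (Theorem 4.2). Let V = {Vⁿ} be a general source and W = {Wⁿ} a general channel, and suppose V is transmissible over W. Then there exists a channel input X = {Xⁿ} (possibly correlated with the source) such that for every sequence {γₙ} of reals with γₙ > 0, γₙ → 0 and nγₙ → ∞, it holds that limₙ Pr{ (1/n) log( Wⁿ(Yⁿ|Xⁿ) / P_{Yⁿ}(Yⁿ) ) ≤ (1/n) log( 1 / P_{Vⁿ}(Vⁿ) ) − γₙ } = 0, where Yⁿ is the channel output due to input Xⁿ. -/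
open Filter Real Topology

namespace ISC

/-!
Feed the channel with `Xⁿ = φₙ(Vⁿ)`. On the event in question
`P(v) W(y|φ(v)) ≤ e^{-nγ} P_Y(y)`. Either the decoder errs, which has probability `εₙ`, or
`v = ψ(y)`; then every output `y` contributes at most one term, and these terms sum to at most
`e^{-nγ} ∑ P_Y(y) = e^{-nγ}`.
-/

theorem injective_prodMk_apply {α β : Type*} (f : α → β) :
    Function.Injective fun a => (a, f a) :=
  fun _ _ h => (Prod.mk.inj h).1

section Prob

variable {α β : Type*} {p : α → ℝ} {S T : Set α}

theorem prob_eq_prob_preimage {f : β → α} (hf : Function.Injective f)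
    (hS : S ∩ Function.support p ⊆ Set.range f) : prob p S = prob (p ∘ f) (f ⁻¹' S) := by
  rw [prob, ← hf.tsum_eq (by rwa [Set.support_indicator])]
  rfl

theorem prob_nonneg (hp : ∀ a, 0 ≤ p a) (S : Set α) : 0 ≤ prob p S :=
  tsum_nonneg (Set.indicator_nonneg fun a _ => hp a)

theorem IsPMF.prob_mono (hp : IsPMF p) (hST : S ⊆ T) : prob p S ≤ prob p T :=
  Summable.tsum_le_tsum (Set.indicator_le_indicator_of_subset hST hp.1)
    (hp.2.summable.indicator S) (hp.2.summable.indicator T)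

theorem IsPMF.prob_union_le (hp : IsPMF p) (S T : Set α) :
    prob p (S ∪ T) ≤ prob p S + prob p T := by
  have hS := hp.2.summable.indicator S
  have hT := hp.2.summable.indicator T
  rw [prob, prob, prob, ← hS.tsum_add hT]
  refine Summable.tsum_le_tsum (fun a => ?_) (hp.2.summable.indicator _) (hS.add hT)
  have hinter : 0 ≤ (S ∩ T).indicator p a := Set.indicator_nonneg (fun b _ => hp.1 b) a
  have hunion := congrFun (Set.indicator_union_add_inter p S T) a
  simp only [Pi.add_apply] at hunion
  linarith

theorem prob_graph_le (q : α × β → ℝ) {r : β → ℝ} (hr : IsPMF r) (ψ : β → α)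
    {c : ℝ} (hc : 0 ≤ c) :
    prob q {z | ψ z.2 = z.1 ∧ q z ≤ c * r z.2} ≤ c := by
  have hinj : Function.Injective fun y => (ψ y, y) := fun _ _ h => (Prod.mk.inj h).2
  have hgraph : {z | ψ z.2 = z.1 ∧ q z ≤ c * r z.2} ∩ Function.support q ⊆
      Set.range fun y => (ψ y, y) :=
    fun z hz => ⟨z.2, Prod.ext hz.1.1 rfl⟩
  have hcr : HasSum (fun y => c * r y) c := by simpa only [mul_one] using hr.2.mul_left c
  rw [prob_eq_prob_preimage hinj hgraph]
  refine tsum_le_of_sum_le' hc fun s => ?_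
  refine (Finset.sum_le_sum fun y _ => ?_).trans
    (sum_le_hasSum s (fun y _ => mul_nonneg hc (hr.1 y)) hcr)
  exact Set.indicator_apply_le' (fun hy => hy.2) fun _ => mul_nonneg hc (hr.1 y)

end Prob

section Channel

variable {𝒳 𝒴 : Type*} {n : ℕ} {PX : Word 𝒳 n → ℝ} {W : Word 𝒳 n → Word 𝒴 n → ℝ}

theorem isPMF_jointXY (hPX : IsPMF PX) (hW : ∀ x, IsPMF (W x)) : IsPMF (jointXY PX W) := by
  have hnonneg (z) : 0 ≤ jointXY PX W z := mul_nonneg (hPX.1 z.1) ((hW z.1).1 z.2)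
  have hfiber (x) : HasSum (fun y => jointXY PX W (x, y)) (PX x) := by
    simpa only [jointXY, mul_one] using (hW x).2.mul_left (PX x)
  have hsum : Summable (jointXY PX W) := by
    rw [summable_prod_of_nonneg hnonneg]
    exact ⟨fun x => (hfiber x).summable, by simpa only [(hfiber _).tsum_eq] using hPX.2.summable⟩
  refine ⟨hnonneg, ?_⟩
  rw [← (hsum.hasSum.prod_fiberwise hfiber).unique hPX.2]
  exact hsum.hasSum

theorem hasSum_outDistX (hPX : IsPMF PX) (hW : ∀ x, IsPMF (W x)) (y : Word 𝒴 n) :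
    HasSum (fun x => jointXY PX W (x, y)) (outDistX PX W y) :=
  ((isPMF_jointXY hPX hW).2.summable.comp_injective (Prod.mk_left_injective y)).hasSum

theorem jointXY_le_outDistX (hPX : IsPMF PX) (hW : ∀ x, IsPMF (W x))
    (x : Word 𝒳 n) (y : Word 𝒴 n) : jointXY PX W (x, y) ≤ outDistX PX W y :=
  le_hasSum (hasSum_outDistX hPX hW y) x fun x' _ => (isPMF_jointXY hPX hW).1 (x', y)

theorem isPMF_outDistX (hPX : IsPMF PX) (hW : ∀ x, IsPMF (W x)) : IsPMF (outDistX PX W) := by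
  have hXY := isPMF_jointXY hPX hW
  refine ⟨fun y => (hasSum_outDistX hPX hW y).nonneg fun x => hXY.1 (x, y), ?_⟩
  exact ((Equiv.prodComm _ _).hasSum_iff.2 hXY.2).prod_fiberwise (hasSum_outDistX hPX hW)

end Channel

section Encoder

variable {𝒱 𝒳 𝒴 : Type*} {n : ℕ} {PV : Word 𝒱 n → ℝ} {W : Word 𝒳 n → Word 𝒴 n → ℝ}

-- Here `jointXY PV (W ∘ φ)` is the law of `(Vⁿ, Yⁿ)`: encoder and channel form one channel `W ∘ φ`.
theorem errProb_eq_prob (hPV : IsPMF PV) (hW : ∀ x, IsPMF (W x))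
    (φ : Word 𝒱 n → Word 𝒳 n) (ψ : Word 𝒴 n → Word 𝒱 n) :
    errProb PV W φ ψ = prob (jointXY PV (W ∘ φ)) {z | ψ z.2 ≠ z.1} := by
  have hsum : Summable (jointXY PV (W ∘ φ)) :=
    (isPMF_jointXY hPV fun v => hW (φ v)).2.summable
  rw [prob, (hsum.indicator {z | ψ z.2 ≠ z.1}).tsum_prod]
  refine tsum_congr fun v => ?_
  rw [prob, ← tsum_mul_left]
  exact tsum_congr fun y => (Set.indicator_const_mul {y | ψ y ≠ v} (W (φ v)) (PV v) y).symm

variable [DecidableEq 𝒳] (φ : Word 𝒱 n → Word 𝒳 n)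

theorem support_codeInput_subset :
    Function.support (codeInput PV φ) ⊆ Set.range fun v => (v, φ v) :=
  Function.support_subset_iff'.2 fun vx hvx =>
    if_neg fun hx => hvx ⟨vx.1, Prod.ext rfl hx.symm⟩

theorem isPMF_codeInput (hPV : IsPMF PV) : IsPMF (codeInput PV φ) := by
  refine ⟨fun vx => ite_nonneg (hPV.1 _) le_rfl, ?_⟩
  rw [← (injective_prodMk_apply φ).hasSum_iff
    (Function.support_subset_iff'.1 (support_codeInput_subset φ))]
  simpa only [Function.comp_def, codeInput, if_true] using hPV.2

theorem tsum_codeInput (v : Word 𝒱 n) : ∑' x, codeInput PV φ (v, x) = PV v :=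
  tsum_ite_eq (φ v) fun _ => PV v

theorem outDist_codeInput : outDist (codeInput PV φ) W = outDistX PV (W ∘ φ) := by
  funext y
  rw [outDist, ← (injective_prodMk_apply φ).tsum_eq
    ((Function.support_mul_subset_left _ _).trans (support_codeInput_subset φ))]
  simp only [codeInput, if_true, outDistX, Function.comp_apply]

theorem prob_jointLaw_codeInput (S : Set (Word 𝒱 n × Word 𝒳 n × Word 𝒴 n)) :
    prob (jointLaw (codeInput PV φ) W) S =
      prob (jointXY PV (W ∘ φ)) {z | (z.1, φ z.1, z.2) ∈ S} := by
  have hinj : Function.Injective fun z : Word 𝒱 n × Word 𝒴 n => (z.1, φ z.1, z.2) :=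
    fun z z' h => Prod.ext (Prod.mk.inj h).1 (Prod.mk.inj (Prod.mk.inj h).2).2
  rw [prob_eq_prob_preimage hinj]
  · congr 1
    funext z
    simp only [Function.comp_apply, jointLaw, codeInput, if_true, jointXY]
  · rintro ⟨v, x, y⟩ ⟨-, hz⟩
    by_cases hx : x = φ v
    · exact ⟨(v, y), by rw [hx]⟩
    · exact absurd (by simp only [jointLaw, codeInput, if_neg hx, zero_mul]) hz

end Encoder

theorem mul_le_exp_neg_mul_of_log_div_le {p w r t : ℝ} (hp : 0 ≤ p) (hw : 0 ≤ w)
    (hr : p * w ≤ r) (h : log (w / r) ≤ log (1 / p) - t) : p * w ≤ exp (-t) * r := by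
  -- If `p * w = 0`, then `h` may involve the junk value `log 0 = 0`, but the claim is trivial.
  rcases (mul_nonneg hp hw).eq_or_lt with hpw | hpw
  · rw [← hpw] at hr ⊢
    positivity
  have hr_pos : 0 < r := hpw.trans_le hr
  have hp_pos : 0 < p := pos_of_mul_pos_left hpw hw
  have hw_pos : 0 < w := pos_of_mul_pos_right hpw hp
  have hratio : w / r ≤ exp (-t) / p := by
    calc w / r = exp (log (w / r)) := (exp_log (div_pos hw_pos hr_pos)).symm
      _ ≤ exp (log (1 / p) - t) := exp_le_exp.2 h
      _ = exp (-t) / p := by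
        rw [sub_eq_add_neg, exp_add, exp_log (one_div_pos.2 hp_pos), one_div_mul_eq_div]
  rw [div_le_div_iff₀ hr_pos hp_pos] at hratio
  rwa [mul_comm p w]

section OneShot

variable {𝒱 𝒳 𝒴 : Type*} [DecidableEq 𝒳] {n : ℕ} {PV : Word 𝒱 n → ℝ}
  {W : Word 𝒳 n → Word 𝒴 n → ℝ}

theorem prob_log_density_le_errProb_add_exp (hPV : IsPMF PV) (hW : ∀ x, IsPMF (W x))
    (φ : Word 𝒱 n → Word 𝒳 n) (ψ : Word 𝒴 n → Word 𝒱 n) (t : ℝ) :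
    prob (jointLaw (codeInput PV φ) W)
      {z | log (W z.2.1 z.2.2 / outDist (codeInput PV φ) W z.2.2) ≤ log (1 / PV z.1) - t} ≤
      errProb PV W φ ψ + exp (-t) := by
  have hWφ (v) : IsPMF ((W ∘ φ) v) := hW (φ v)
  have hVY := isPMF_jointXY hPV hWφ
  rw [prob_jointLaw_codeInput, outDist_codeInput, errProb_eq_prob hPV hW]
  set q := jointXY PV (W ∘ φ)
  set r := outDistX PV (W ∘ φ)
  calc
    _ ≤ prob q ({z | ψ z.2 ≠ z.1} ∪ {z | ψ z.2 = z.1 ∧ q z ≤ exp (-t) * r z.2}) := by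
      refine hVY.prob_mono fun z hz => (ne_or_eq _ _).imp_right fun hdec => ⟨hdec, ?_⟩
      exact mul_le_exp_neg_mul_of_log_div_le (hPV.1 _) ((hWφ _).1 _)
        (jointXY_le_outDistX hPV hWφ z.1 z.2) hz
    _ ≤ prob q {z | ψ z.2 ≠ z.1} + prob q {z | ψ z.2 = z.1 ∧ q z ≤ exp (-t) * r z.2} :=
      hVY.prob_union_le _ _
    _ ≤ prob q {z | ψ z.2 ≠ z.1} + exp (-t) := by
      gcongr
      exact prob_graph_le q (isPMF_outDistX hPV hWφ) ψ (exp_pos _).le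

theorem prob_log_density_rate_le_errProb_add_exp (hn : n ≠ 0) (hPV : IsPMF PV)
    (hW : ∀ x, IsPMF (W x)) (φ : Word 𝒱 n → Word 𝒳 n) (ψ : Word 𝒴 n → Word 𝒱 n) (γ : ℝ) :
    prob (jointLaw (codeInput PV φ) W)
      {z | 1 / (n : ℝ) * log (W z.2.1 z.2.2 / outDist (codeInput PV φ) W z.2.2) ≤
        1 / (n : ℝ) * log (1 / PV z.1) - γ} ≤
      errProb PV W φ ψ + exp (-(n * γ)) := by
  have hn_pos : (0 : ℝ) < n := by exact_mod_cast Nat.pos_of_ne_zero hn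
  have hscale (a b : ℝ) : 1 / (n : ℝ) * a ≤ 1 / (n : ℝ) * b - γ ↔ a ≤ b - n * γ := by
    field_simp
  simpa only [hscale] using prob_log_density_le_errProb_add_exp hPV hW φ ψ (n * γ)

end OneShot

theorem converse_theorem_general {𝒱 𝒳 𝒴 : Type*}
    (PV : (n : ℕ) → Word 𝒱 n → ℝ) (hPV : ∀ n, IsPMF (PV n))
    (W : (n : ℕ) → Word 𝒳 n → Word 𝒴 n → ℝ) (hW : ∀ n x, IsPMF (W n x))
    (htrans : Transmissible PV W) :
    ∃ PVX : (n : ℕ) → Word 𝒱 n × Word 𝒳 n → ℝ,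
      (∀ n, IsPMF (PVX n)) ∧
      (∀ n v, (∑' x : Word 𝒳 n, PVX n (v, x)) = PV n v) ∧
      ∀ γ : ℕ → ℝ, Tendsto (fun n : ℕ => (n : ℝ) * γ n) atTop atTop →
        Tendsto (fun n =>
          prob (jointLaw (PVX n) (W n))
            {z : Word 𝒱 n × Word 𝒳 n × Word 𝒴 n |
              (1 / (n : ℝ)) * Real.log (W n z.2.1 z.2.2 / outDist (PVX n) (W n) z.2.2) ≤
                (1 / (n : ℝ)) * Real.log (1 / PV n z.1) - γ n}) atTop (nhds 0) := by
  classical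
  obtain ⟨φ, ψ, herr⟩ := htrans
  have hinput (n) : IsPMF (codeInput (PV n) (φ n)) := isPMF_codeInput (φ n) (hPV n)
  refine ⟨fun n => codeInput (PV n) (φ n), hinput, fun n => tsum_codeInput (φ n), fun γ hγ => ?_⟩
  have hbound : Tendsto (fun n => errProb (PV n) (W n) (φ n) (ψ n) + exp (-(n * γ n)))
      atTop (𝓝 0) := by
    simpa only [add_zero, Function.comp_def] using
      herr.add (tendsto_exp_neg_atTop_nhds_zero.comp hγ)
  refine squeeze_zero' (.of_forall fun n => prob_nonneg (fun z => ?_) _) ?_ hbound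
  · exact mul_nonneg ((hinput n).1 _) ((hW n _).1 _)
  filter_upwards [eventually_ne_atTop 0] with n hn
  exact prob_log_density_rate_le_errProb_add_exp hn (hPV n) (hW n) (φ n) (ψ n) (γ n)

/-- **Converse theorem** (Theorem 4.2). -/
theorem converse_theorem
    {𝒱 𝒳 𝒴 : Type} [Countable 𝒱] [Countable 𝒳] [Countable 𝒴]
    (PV : (n : ℕ) → Word 𝒱 n → ℝ) (hPV : ∀ n, IsPMF (PV n))
    (W : (n : ℕ) → Word 𝒳 n → Word 𝒴 n → ℝ) (hW : ∀ n x, IsPMF (W n x))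
    (htrans : Transmissible PV W) :
    ∃ PVX : (n : ℕ) → Word 𝒱 n × Word 𝒳 n → ℝ,
      (∀ n, IsPMF (PVX n)) ∧
      (∀ n v, (∑' x : Word 𝒳 n, PVX n (v, x)) = PV n v) ∧
      ∀ γ : ℕ → ℝ, (∀ n, 0 < γ n) → Tendsto γ atTop (nhds 0) →
        Tendsto (fun n : ℕ => (n : ℝ) * γ n) atTop atTop →
        Tendsto (fun n =>
          prob (jointLaw (PVX n) (W n))
            {z : Word 𝒱 n × Word 𝒳 n × Word 𝒴 n |
              (1 / (n : ℝ)) * Real.log (W n z.2.1 z.2.2 / outDist (PVX n) (W n) z.2.2) ≤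
                (1 / (n : ℝ)) * Real.log (1 / PV n z.1) - γ n}) atTop (nhds 0) := by
  obtain ⟨PVX, hPVX, hmarginal, hlim⟩ := converse_theorem_general PV hPV W hW htrans
  exact ⟨PVX, hPVX, hmarginal, fun γ _ _ => hlim γ⟩

end ISC
end
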